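/- arXiv:0802.0933 — 3 statements merged into one kernel-verified Lean document; each statement's English description precedes it below -/
import Mathlib

section
/- For every ε > 0 there exists an integer K ≥ 1 such that for all k ≥ K and all x, y ∈ [0,m], writing l(x,y;u) = g(x,u) − g(y,u), one has ∫_U [ φ_k(x − y + l(x,y;u)) − φ_k(x − y) − φ_k′(x − y) l(x,y;u) ] μ(du) ≤ ε; that is, these integrals converge to 0 as k → ∞, uniformly in x, y ∈ [0,m]. -/
open MeasureTheory Set Filter

/-!
The first-order remainder of an even function is unchanged when the base point and the increment
both change sign, and the monotonicity of `g` gives `x - y` and `g x u - g y u` the same sign. So it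
is enough to bound `∫_h^{h+l} ∫_h^y ψ_k(z) dz dy`, the remainder of `φ_k` at `h > 0` with increment
`l ≥ 0`.

As `ρ` is non-decreasing, `ψ_k ≤ C := (2/k) ρ(h)⁻²` on `[h, ∞)`, so the inner integral is at most
`C (y - h) ≤ C l`; as `ψ_k` vanishes on `[1, ∞)`, it is also at most `C`. The remainder is therefore
at most `C min(l, l²)`. Integrating over `U` with `h = |x - y|`, the factor `ρ(h)²` from the
hypothesis on `g` cancels the one in `C`, which leaves the bound `2/k`.
-/

section FirstOrderRemainder

/-- The remainder of the first-order Taylor expansion of `f` at `h` with increment `l`, written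
`D_l f(h)` in the theory of stochastic equations with jumps. The derivative is `deriv f h`, hence
`0` by convention where `f` is not differentiable. -/
noncomputable def firstOrderRemainder (f : ℝ → ℝ) (h l : ℝ) : ℝ :=
  f (h + l) - f h - deriv f h * l

variable {f : ℝ → ℝ}

lemma firstOrderRemainder_zero_right (h : ℝ) : firstOrderRemainder f h 0 = 0 := by
  simp [firstOrderRemainder]

lemma firstOrderRemainder_neg_neg (hf : f.Even) (h l : ℝ) :
    firstOrderRemainder f (-h) (-l) = firstOrderRemainder f h l := by
  have hderiv : deriv f h = -deriv f (-h) := by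
    simpa only [hf.eq] using deriv_comp_neg f h
  rw [firstOrderRemainder, firstOrderRemainder, ← neg_add, hf, hf, hderiv]
  ring

lemma firstOrderRemainder_abs_abs (hf : f.Even) {h l : ℝ} (hl : 0 ≤ h * l) :
    firstOrderRemainder f |h| |l| = firstOrderRemainder f h l := by
  rcases mul_nonneg_iff.1 hl with ⟨hh, hl⟩ | ⟨hh, hl⟩
  · rw [abs_of_nonneg hh, abs_of_nonneg hl]
  · rw [abs_of_nonpos hh, abs_of_nonpos hl, firstOrderRemainder_neg_neg hf]

end FirstOrderRemainder

section IntervalIntegral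

variable {f : ℝ → ℝ} {p q C : ℝ}

lemma intervalIntegral_le_mul_sub (hpq : p ≤ q) (hf : IntervalIntegrable f volume p q)
    (hC : ∀ x ∈ Icc p q, f x ≤ C) : ∫ x in p..q, f x ≤ C * (q - p) :=
  calc ∫ x in p..q, f x
    _ ≤ ∫ _ in p..q, C := intervalIntegral.integral_mono_on hpq hf intervalIntegrable_const hC
    _ = C * (q - p) := by rw [intervalIntegral.integral_const, smul_eq_mul, mul_comm]

lemma intervalIntegral_le_mul_of_eq_zero {R : ℝ} (hf : ∀ p q, IntervalIntegrable f volume p q)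
    (hp : 0 ≤ p) (hpq : p ≤ q) (hR : 0 ≤ R) (hC : ∀ x, p ≤ x → f x ≤ C)
    (hf0 : ∀ x, R ≤ x → f x = 0) : ∫ x in p..q, f x ≤ C * R := by
  have hC0 : 0 ≤ C := by
    simpa only [hf0 _ (le_max_right p R)] using hC _ (le_max_left p R)
  rcases le_total (q - p) R with hqp | hqp
  · exact (intervalIntegral_le_mul_sub hpq (hf p q) fun x hx => hC x hx.1).trans (by gcongr)
  · have htail : ∫ x in (p + R)..q, f x ≤ 0 * (q - (p + R)) :=
      intervalIntegral_le_mul_sub (by linarith) (hf _ _) fun x hx =>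
        (hf0 x (by linarith [hx.1])).le
    have hhead : ∫ x in p..(p + R), f x ≤ C * (p + R - p) :=
      intervalIntegral_le_mul_sub (by linarith) (hf _ _) fun x hx => hC x hx.1
    rw [← intervalIntegral.integral_add_adjacent_intervals (hf p (p + R)) (hf (p + R) q)]
    linarith

end IntervalIntegral

section EvenDoublePrimitive

/-- The even function with second derivative `ψ |x|` that vanishes at `0` together with its
derivative. When `ψ ≥ 0` has integral `1` and is supported near `0`, this is the Yamada–Watanabe
approximation of `|x|`. -/
noncomputable def evenDoublePrimitive (ψ : ℝ → ℝ) (x : ℝ) : ℝ :=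
  ∫ y in (0 : ℝ)..|x|, ∫ z in (0 : ℝ)..y, ψ z

variable {ψ : ℝ → ℝ}

lemma even_evenDoublePrimitive : (evenDoublePrimitive ψ).Even := fun x => by
  rw [evenDoublePrimitive, evenDoublePrimitive, abs_neg]

lemma hasDerivAt_evenDoublePrimitive (hψ : ∀ p q, IntervalIntegrable ψ volume p q) {h : ℝ}
    (hh : 0 < h) : HasDerivAt (evenDoublePrimitive ψ) (∫ z in (0 : ℝ)..h, ψ z) h := by
  have hcont : Continuous fun y => ∫ z in (0 : ℝ)..y, ψ z :=
    intervalIntegral.continuous_primitive hψ 0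
  refine (hcont.integral_hasStrictDerivAt 0 h).hasDerivAt.congr_of_eventuallyEq ?_
  filter_upwards [lt_mem_nhds hh] with x hx
  rw [evenDoublePrimitive, abs_of_pos hx]

lemma firstOrderRemainder_evenDoublePrimitive (hψ : ∀ p q, IntervalIntegrable ψ volume p q)
    {h l : ℝ} (hh : 0 < h) (hhl : 0 ≤ h + l) :
    firstOrderRemainder (evenDoublePrimitive ψ) h l = ∫ y in h..(h + l), ∫ z in h..y, ψ z := by
  have hprim : ∀ p q, IntervalIntegrable (fun y => ∫ z in (0 : ℝ)..y, ψ z) volume p q :=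
    (intervalIntegral.continuous_primitive hψ 0).intervalIntegrable
  simp_rw [← intervalIntegral.integral_interval_sub_left (hψ 0 _) (hψ 0 h)]
  rw [intervalIntegral.integral_sub (hprim _ _) intervalIntegrable_const,
    ← intervalIntegral.integral_interval_sub_left (hprim 0 (h + l)) (hprim 0 h),
    intervalIntegral.integral_const, firstOrderRemainder,
    (hasDerivAt_evenDoublePrimitive hψ hh).deriv, evenDoublePrimitive, evenDoublePrimitive,
    abs_of_pos hh, abs_of_nonneg hhl, smul_eq_mul, add_sub_cancel_left, mul_comm l]

lemma firstOrderRemainder_evenDoublePrimitive_nonneg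
    (hψ : ∀ p q, IntervalIntegrable ψ volume p q) (hψ0 : ∀ z, 0 ≤ ψ z) {h l : ℝ} (hh : 0 < h)
    (hl : 0 ≤ l) : 0 ≤ firstOrderRemainder (evenDoublePrimitive ψ) h l := by
  rw [firstOrderRemainder_evenDoublePrimitive hψ hh (by positivity)]
  exact intervalIntegral.integral_nonneg (by linarith) fun y hy =>
    intervalIntegral.integral_nonneg hy.1 fun z _ => hψ0 z

lemma firstOrderRemainder_evenDoublePrimitive_le (hψ : ∀ p q, IntervalIntegrable ψ volume p q)
    {h l C R : ℝ} (hh : 0 < h) (hl : 0 ≤ l) (hC0 : 0 ≤ C) (hR : 0 ≤ R)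
    (hC : ∀ z, h ≤ z → ψ z ≤ C) (hψR : ∀ z, R ≤ z → ψ z = 0) :
    firstOrderRemainder (evenDoublePrimitive ψ) h l ≤ C * min (R * l) (l ^ 2) := by
  have hle : h ≤ h + l := by linarith
  have hinner : IntervalIntegrable (fun y => ∫ z in h..y, ψ z) volume h (h + l) :=
    (intervalIntegral.continuous_primitive hψ h).intervalIntegrable _ _
  have hlinear : ∫ y in h..(h + l), ∫ z in h..y, ψ z ≤ C * R * (h + l - h) :=
    intervalIntegral_le_mul_sub hle hinner fun y hy =>
      intervalIntegral_le_mul_of_eq_zero hψ hh.le hy.1 hR hC hψR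
  have hquadratic : ∫ y in h..(h + l), ∫ z in h..y, ψ z ≤ C * l * (h + l - h) :=
    intervalIntegral_le_mul_sub hle hinner fun y hy =>
      calc ∫ z in h..y, ψ z
        _ ≤ C * (y - h) := intervalIntegral_le_mul_sub hy.1 (hψ h y) fun z hz => hC z hz.1
        _ ≤ C * l := by gcongr; linarith [hy.2]
  rw [firstOrderRemainder_evenDoublePrimitive hψ hh (by positivity), mul_min_of_nonneg _ _ hC0]
  exact le_min (by linarith) (by linarith)

end EvenDoublePrimitive

section YamadaWatanabe

/-- The conditions on a Yamada–Watanabe density `ψ` relative to the modulus `ρ`. The paper's `ψ_k`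
is the case `c = 2 / k`, and of its support only an upper bound `R` is recorded. -/
structure IsYamadaWatanabeDensity (ρ : ℝ → ℝ) (R c : ℝ) (ψ : ℝ → ℝ) : Prop where
  intervalIntegrable : ∀ p q, IntervalIntegrable ψ volume p q
  nonneg : ∀ z, 0 ≤ ψ z
  eq_zero_of_le : ∀ z, R ≤ z → ψ z = 0
  le_mul_inv_sq : ∀ z, 0 < z → ψ z ≤ c * ((ρ z) ^ 2)⁻¹

namespace IsYamadaWatanabeDensity

variable {ρ ψ : ℝ → ℝ} {R c h : ℝ}

lemma of_Ioo {p q : ℝ} (hc : 0 ≤ c) (hqR : q ≤ R)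
    (hψ : ∀ s t, IntervalIntegrable ψ volume s t) (hψ0 : ∀ z, 0 ≤ ψ z)
    (hsupp : ∀ z, z ∉ Ioo p q → ψ z = 0) (hψρ : ∀ z ∈ Ioo p q, ψ z ≤ c * ((ρ z) ^ 2)⁻¹) :
    IsYamadaWatanabeDensity ρ R c ψ where
  intervalIntegrable := hψ
  nonneg := hψ0
  eq_zero_of_le z hz := hsupp z fun hmem => hmem.2.not_ge (hqR.trans hz)
  le_mul_inv_sq z _ := by
    by_cases hmem : z ∈ Ioo p q
    · exact hψρ z hmem
    · rw [hsupp z hmem]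
      positivity

lemma const_nonneg (hψ : IsYamadaWatanabeDensity ρ R c ψ) (hρ_pos : ∀ z, 0 < z → 0 < ρ z) :
    0 ≤ c :=
  nonneg_of_mul_nonneg_left ((hψ.nonneg 1).trans (hψ.le_mul_inv_sq 1 one_pos))
    (inv_pos.2 (pow_pos (hρ_pos 1 one_pos) 2))

lemma le_mul_inv_sq_of_le (hψ : IsYamadaWatanabeDensity ρ R c ψ)
    (hρ_mono : MonotoneOn ρ (Ioi 0)) (hρ_pos : ∀ z, 0 < z → 0 < ρ z) (hh : 0 < h) {z : ℝ}
    (hz : h ≤ z) : ψ z ≤ c * ((ρ h) ^ 2)⁻¹ := by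
  have hρh : 0 < ρ h := hρ_pos h hh
  have hρ_le : ρ h ≤ ρ z := hρ_mono hh (hh.trans_le hz) hz
  have hc : 0 ≤ c := hψ.const_nonneg hρ_pos
  exact (hψ.le_mul_inv_sq z (hh.trans_le hz)).trans (by gcongr)

lemma firstOrderRemainder_nonneg (hψ : IsYamadaWatanabeDensity ρ R c ψ) (hh : h ≠ 0) {l : ℝ}
    (hl : 0 ≤ h * l) : 0 ≤ firstOrderRemainder (evenDoublePrimitive ψ) h l := by
  rw [← firstOrderRemainder_abs_abs even_evenDoublePrimitive hl]
  exact firstOrderRemainder_evenDoublePrimitive_nonneg hψ.intervalIntegrable hψ.nonneg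
    (abs_pos.2 hh) (abs_nonneg l)

lemma firstOrderRemainder_le (hψ : IsYamadaWatanabeDensity ρ R c ψ) (hR : 1 ≤ R)
    (hρ_mono : MonotoneOn ρ (Ioi 0)) (hρ_pos : ∀ z, 0 < z → 0 < ρ z) (hh : h ≠ 0) {l : ℝ}
    (hl : 0 ≤ h * l) :
    firstOrderRemainder (evenDoublePrimitive ψ) h l ≤
      c * ((ρ |h|) ^ 2)⁻¹ * R * min |l| (l ^ 2) := by
  have hc : 0 ≤ c := hψ.const_nonneg hρ_pos
  have hmin : min (R * |l|) (l ^ 2) ≤ R * min |l| (l ^ 2) := by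
    rw [mul_min_of_nonneg _ _ (by positivity)]
    exact min_le_min_left _ (le_mul_of_one_le_left (sq_nonneg l) hR)
  calc firstOrderRemainder (evenDoublePrimitive ψ) h l
    _ = firstOrderRemainder (evenDoublePrimitive ψ) |h| |l| :=
      (firstOrderRemainder_abs_abs even_evenDoublePrimitive hl).symm
    _ ≤ c * ((ρ |h|) ^ 2)⁻¹ * min (R * |l|) (|l| ^ 2) :=
      firstOrderRemainder_evenDoublePrimitive_le hψ.intervalIntegrable (abs_pos.2 hh)
        (abs_nonneg l) (by positivity) (by positivity)
        (fun _ => hψ.le_mul_inv_sq_of_le hρ_mono hρ_pos (abs_pos.2 hh)) hψ.eq_zero_of_le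
    _ ≤ c * ((ρ |h|) ^ 2)⁻¹ * R * min |l| (l ^ 2) := by
      rw [sq_abs, mul_assoc _ R]
      gcongr

lemma integral_firstOrderRemainder_mem_Icc {U : Type*} [MeasurableSpace U] {μ : Measure U}
    (hψ : IsYamadaWatanabeDensity ρ R c ψ) (hR : 1 ≤ R) (hρ_mono : MonotoneOn ρ (Ioi 0))
    (hρ_pos : ∀ z, 0 < z → 0 < ρ z) (hh : h ≠ 0) {l : U → ℝ} (hl : ∀ᵐ u ∂μ, 0 ≤ h * l u)
    (hint : Integrable (fun u => min |l u| (l u ^ 2)) μ)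
    (hbound : ∫ u, min |l u| (l u ^ 2) ∂μ ≤ (ρ |h|) ^ 2) :
    ∫ u, firstOrderRemainder (evenDoublePrimitive ψ) h (l u) ∂μ ∈ Icc 0 (c * R) := by
  have hρh : 0 < ρ |h| := hρ_pos _ (abs_pos.2 hh)
  have hc : 0 ≤ c := hψ.const_nonneg hρ_pos
  have hnonneg : ∀ᵐ u ∂μ, 0 ≤ firstOrderRemainder (evenDoublePrimitive ψ) h (l u) :=
    hl.mono fun _ => hψ.firstOrderRemainder_nonneg hh
  refine ⟨integral_nonneg_of_ae hnonneg, ?_⟩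
  calc ∫ u, firstOrderRemainder (evenDoublePrimitive ψ) h (l u) ∂μ
    _ ≤ ∫ u, c * ((ρ |h|) ^ 2)⁻¹ * R * min |l u| (l u ^ 2) ∂μ :=
      integral_mono_of_nonneg hnonneg (hint.const_mul _)
        (hl.mono fun _ => hψ.firstOrderRemainder_le hR hρ_mono hρ_pos hh)
    _ = c * ((ρ |h|) ^ 2)⁻¹ * R * ∫ u, min |l u| (l u ^ 2) ∂μ := integral_const_mul _ _
    _ ≤ c * ((ρ |h|) ^ 2)⁻¹ * R * (ρ |h|) ^ 2 := by gcongr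
    _ = c * R := by field_simp

end IsYamadaWatanabeDensity

end YamadaWatanabe

lemma integrable_min_abs_sq_of_abs_le {U : Type*} [MeasurableSpace U] {μ : Measure U}
    {f F : U → ℝ} (hF : Integrable (fun u => min (F u) (F u ^ 2)) μ)
    (hf : AEStronglyMeasurable f μ) (hfF : ∀ᵐ u ∂μ, |f u| ≤ F u) :
    Integrable (fun u => min |f u| (f u ^ 2)) μ := by
  refine hF.mono' (hf.norm.inf (hf.pow 2)) (hfF.mono fun u hu => ?_)
  rw [Real.norm_of_nonneg (le_min (abs_nonneg _) (sq_nonneg _))]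
  exact min_le_min hu (sq_le_sq.2 (hu.trans (le_abs_self _)))

lemma integrable_min_abs_sq_sub_of_monotoneOn {X U : Type*} [Preorder X] [MeasurableSpace U]
    {μ : Measure U} {S : Set X} {m : X} {g : X → U → ℝ} (hm : IsGreatest S m)
    (hg_meas : ∀ x ∈ S, AEStronglyMeasurable (g x) μ) (hg_nonneg : ∀ x ∈ S, ∀ u, 0 ≤ g x u)
    (hg_mono : ∀ u, MonotoneOn (fun x => g x u) S)
    (hg_int : Integrable (fun u => min (g m u) ((g m u) ^ 2)) μ) {x y : X} (hx : x ∈ S)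
    (hy : y ∈ S) : Integrable (fun u => min |g x u - g y u| ((g x u - g y u) ^ 2)) μ :=
  integrable_min_abs_sq_of_abs_le hg_int ((hg_meas x hx).sub (hg_meas y hy)) <|
    ae_of_all μ fun u =>
      abs_sub_le_of_nonneg_of_le (hg_nonneg x hx u) (hg_mono u hx hm.1 (hm.2 hx))
        (hg_nonneg y hy u) (hg_mono u hy hm.1 (hm.2 hy))

lemma exists_forall_ge_le_of_tendstoUniformlyOn_zero {ι X : Type*} [Preorder ι] [IsDirectedOrder ι]
    {F : ι → X → ℝ} {s : Set X} (hF : TendstoUniformlyOn F 0 atTop s) (n : ι) {ε : ℝ}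
    (hε : 0 < ε) : ∃ N, n ≤ N ∧ ∀ k, N ≤ k → ∀ x ∈ s, F k x ≤ ε := by
  have : Nonempty ι := ⟨n⟩
  have hlt : ∀ᶠ k in atTop, ∀ x ∈ s, F k x ≤ ε :=
    (Metric.tendstoUniformlyOn_iff.1 hF ε hε).mono fun k hk x hx =>
      (le_abs_self _).trans (by simpa using (hk x hx).le)
  exact ((eventually_ge_atTop n).and (eventually_forall_ge_atTop.2 hlt)).exists

theorem stmt8_general {ι U : Type*} [MeasurableSpace U] {μ : Measure U} {L : Filter ι}
    {ψ : ι → ℝ → ℝ} {c : ι → ℝ} {R : ℝ} {ρ : ℝ → ℝ} {S : Set ℝ} {g : ℝ → U → ℝ}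
    (hψ : ∀ᶠ k in L, IsYamadaWatanabeDensity ρ R (c k) (ψ k)) (hc : Tendsto c L (nhds 0))
    (hR : 1 ≤ R) (hρ_mono : MonotoneOn ρ (Ioi 0)) (hρ_pos : ∀ z, 0 < z → 0 < ρ z)
    (hg_mono : ∀ u, MonotoneOn (fun x => g x u) S)
    (hg_int : ∀ x ∈ S, ∀ y ∈ S,
      Integrable (fun u => min |g x u - g y u| ((g x u - g y u) ^ 2)) μ)
    (hg_bound : ∀ x ∈ S, ∀ y ∈ S,
      ∫ u, min |g x u - g y u| ((g x u - g y u) ^ 2) ∂μ ≤ (ρ |x - y|) ^ 2) :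
    TendstoUniformlyOn
      (fun k p => ∫ u, firstOrderRemainder (evenDoublePrimitive (ψ k)) (p.1 - p.2)
        (g p.1 u - g p.2 u) ∂μ) 0 L (S ×ˢ S) := by
  have hcR : Tendsto (fun k => c k * R) L (nhds 0) := by simpa only [zero_mul] using hc.mul_const R
  refine Metric.tendstoUniformlyOn_iff.2 fun ε hε => ?_
  filter_upwards [hψ, hcR.eventually_lt_const hε] with k hk hkε
  rintro ⟨x, y⟩ ⟨hx, hy⟩
  rw [Pi.zero_apply, dist_zero_left, Real.norm_eq_abs]
  rcases eq_or_ne x y with rfl | hxy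
  · simpa only [sub_self, firstOrderRemainder_zero_right, integral_zero, abs_zero] using hε
  · have hsign : ∀ u, 0 ≤ (x - y) * (g x u - g y u) := fun u =>
      (monotoneOn_id.monovaryOn (hg_mono u)).sub_mul_sub_nonneg hy hx
    have hmem := hk.integral_firstOrderRemainder_mem_Icc hR hρ_mono hρ_pos (sub_ne_zero.2 hxy)
      (ae_of_all μ hsign) (hg_int x hx y hy) (hg_bound x hx y hy)
    exact (abs_of_nonneg hmem.1).trans_lt (hmem.2.trans_lt hkε)

/-- Under condition (3.b), `∫_U D_{l(x,y;u)} φ_k(x-y) μ(du) → 0` as `k → ∞`,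
uniformly in `x, y ∈ [0,m]`. -/
theorem stmt8 {U : Type*} [MeasurableSpace U] (μ : Measure U)
    (a : ℕ → ℝ) (ψ : ℕ → ℝ → ℝ) (φ : ℕ → ℝ → ℝ)
    (ha_pos : ∀ j, 0 < a j) (ha_anti : StrictAnti a) (ha0 : a 0 = 1)
    (ha_lim : Tendsto a atTop (nhds 0))
    (hψ_cont : ∀ k, 1 ≤ k → Continuous (ψ k))
    (hψ_nonneg : ∀ k, 1 ≤ k → ∀ z, 0 ≤ ψ k z)
    (hψ_supp : ∀ k, 1 ≤ k → ∀ z, z ∉ Ioo (a k) (a (k - 1)) → ψ k z = 0)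
    (hψ_int : ∀ k, 1 ≤ k → (∫ z, ψ k z) = 1)
    (hφ : ∀ k x, φ k x = ∫ y in (0:ℝ)..|x|, ∫ z in (0:ℝ)..y, ψ k z)
    (ρ : ℝ → ℝ) (hρ_nonneg : ∀ z, 0 ≤ z → 0 ≤ ρ z)
    (hρ_mono : MonotoneOn ρ (Ici 0)) (hρ_pos : ∀ z, 0 < z → 0 < ρ z)
    (hψρ : ∀ k, 1 ≤ k → ∀ z ∈ Ioo (a k) (a (k - 1)), ψ k z ≤ (2 / k) * ((ρ z) ^ 2)⁻¹)
    (m : ℝ) (hm : 1 ≤ m)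
    (g : ℝ → U → ℝ)
    (hg_meas : ∀ x ∈ Icc (0:ℝ) m, Measurable (g x))
    (hg_nonneg : ∀ x ∈ Icc (0:ℝ) m, ∀ u, 0 ≤ g x u)
    (hg_mono : ∀ u : U, ∀ x ∈ Icc (0:ℝ) m, ∀ y ∈ Icc (0:ℝ) m, x ≤ y → g x u ≤ g y u)
    (hg_int : Integrable (fun u => min (g m u) ((g m u) ^ 2)) μ)
    (hg_bound : ∀ x ∈ Icc (0:ℝ) m, ∀ y ∈ Icc (0:ℝ) m,
      ∫ u, min |g x u - g y u| ((g x u - g y u) ^ 2) ∂μ ≤ (ρ |x - y|) ^ 2) :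
    ∀ ε : ℝ, 0 < ε → ∃ K : ℕ, 1 ≤ K ∧ ∀ k : ℕ, K ≤ k →
      ∀ x ∈ Icc (0:ℝ) m, ∀ y ∈ Icc (0:ℝ) m,
        (∫ u, (φ k (x - y + (g x u - g y u)) - φ k (x - y)
            - deriv (φ k) (x - y) * (g x u - g y u)) ∂μ) ≤ ε := by
  obtain rfl : φ = fun k => evenDoublePrimitive (ψ k) := funext₂ hφ
  have hψ : ∀ᶠ k : ℕ in atTop, IsYamadaWatanabeDensity ρ 1 (2 / k) (ψ k) :=
    (eventually_ge_atTop 1).mono fun k hk =>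
      .of_Ioo (by positivity) (ha0 ▸ ha_anti.antitone (Nat.zero_le _))
        (hψ_cont k hk).intervalIntegrable (hψ_nonneg k hk) (hψ_supp k hk) (hψρ k hk)
  have hlim := stmt8_general hψ (tendsto_const_div_atTop_nhds_zero_nat (2 : ℝ)) le_rfl
    (hρ_mono.mono Ioi_subset_Ici_self) hρ_pos hg_mono
    (fun _ hx _ hy => integrable_min_abs_sq_sub_of_monotoneOn
      (isGreatest_Icc (zero_le_one.trans hm)) (fun x hx => (hg_meas x hx).aestronglyMeasurable)
      hg_nonneg hg_mono hg_int hx hy) hg_bound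
  intro ε hε
  obtain ⟨K, hK1, hK⟩ := exists_forall_ge_le_of_tendstoUniformlyOn_zero hlim 1 hε
  exact ⟨K, hK1, fun k hk x hx y hy => hK k hk (x, y) ⟨hx, hy⟩⟩
end

section
/- For every ε > 0 there exists an integer K ≥ 1 such that for all k ≥ K and all x, y ∈ [0,m], writing l(x,y;u) = g(x,u) − g(y,u), one has ∫_U [ φ_k(x − y + l(x,y;u)) − φ_k(x − y) − φ_k′(x − y) l(x,y;u) ] μ(du) ≤ ε; that is, these integrals converge to 0 as k → ∞, uniformly in x, y ∈ [0,m]. -/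
open MeasureTheory Set Filter

/-!
On `(0, ∞)` the function `φ` has derivative `G y = ∫ z in 0..y, ψ z`. Since `φ` is even and `g` is
monotone, one may take `w = x - y > 0` and `h = g x u - g y u ≥ 0`, and then the integrand equals
`∫ y in w..w + h, (G y - G w)`. It is non-negative and has two upper bounds:

* `h ≤ ρ 1 * f u` for `w ≤ 1`, because `G y - G w ≤ 1`, while the integrand vanishes for `w ≥ 1`;
* `c * h ^ 2 / 2` whenever `ψ ≤ c` on `[w, ∞)`; monotonicity of `ρ` allows `c = (2 / k) / ρ(w)²`,
  and `h ≤ ρ(w) f(u)` turns the bound into `f(u)² / k`.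

So the integrand is at most `min (f² / k) (ρ 1 * f)`, uniformly in `x` and `y`. This majorant tends
to zero pointwise and is dominated by a multiple of `min f f²`, so its integral tends to zero by
dominated convergence.
-/

/-- The operator `D_h φ(w) = φ(w + h) - φ(w) - φ'(w) h` of the integrand, that is, the remainder of
the first-order Taylor expansion of `φ` at `w`. -/
noncomputable def taylorRemainder (φ : ℝ → ℝ) (w h : ℝ) : ℝ :=
  φ (w + h) - φ w - deriv φ w * h

lemma taylorRemainder_zero_right (φ : ℝ → ℝ) (w : ℝ) : taylorRemainder φ w 0 = 0 := by
  simp [taylorRemainder]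

lemma continuous_taylorRemainder {φ : ℝ → ℝ} (hφ : Continuous φ) (w : ℝ) :
    Continuous (taylorRemainder φ w) := by
  unfold taylorRemainder
  fun_prop

lemma taylorRemainder_neg_neg {φ : ℝ → ℝ} (hφ : Function.Even φ) (w h : ℝ) :
    taylorRemainder φ (-w) (-h) = taylorRemainder φ w h := by
  have hderiv : deriv φ (-w) = -deriv φ w := by
    rw [← neg_eq_iff_eq_neg, ← deriv_comp_neg, funext hφ]
  rw [taylorRemainder, taylorRemainder, hderiv, ← neg_add, hφ, hφ, neg_mul_neg]

lemma taylorRemainder_eq_integral {φ φ' : ℝ → ℝ} {w h : ℝ} (hh : 0 ≤ h)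
    (hderiv : ∀ y ∈ Icc w (w + h), HasDerivAt φ (φ' y) y)
    (hcont : ContinuousOn φ' (Icc w (w + h))) :
    taylorRemainder φ w h = ∫ y in w..(w + h), (φ' y - φ' w) := by
  have hle : w ≤ w + h := le_add_of_nonneg_right hh
  have hint : IntervalIntegrable φ' volume w (w + h) := hcont.intervalIntegrable_of_Icc hle
  have hFTC : ∫ y in w..(w + h), φ' y = φ (w + h) - φ w :=
    intervalIntegral.integral_eq_sub_of_hasDerivAt (by rwa [uIcc_of_le hle]) hint
  rw [intervalIntegral.integral_sub hint intervalIntegrable_const, hFTC,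
    intervalIntegral.integral_const, taylorRemainder, (hderiv w (left_mem_Icc.2 hle)).deriv,
    smul_eq_mul, add_sub_cancel_left, mul_comm]

/-- The Yamada–Watanabe function of `ψ`: the even function `φ` with `φ 0 = 0` and `φ'' = ψ` on
`(0, ∞)`, which approximates `|x|` when `ψ` is a probability density concentrated near zero. -/
noncomputable def yamadaWatanabe (ψ : ℝ → ℝ) (x : ℝ) : ℝ :=
  ∫ y in (0 : ℝ)..|x|, ∫ z in (0 : ℝ)..y, ψ z

lemma even_yamadaWatanabe (ψ : ℝ → ℝ) : Function.Even (yamadaWatanabe ψ) := fun x => by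
  rw [yamadaWatanabe, yamadaWatanabe, abs_neg]

section YamadaWatanabe

variable {ψ : ℝ → ℝ} {w h : ℝ}

lemma continuous_yamadaWatanabe (hψ : ∀ p q, IntervalIntegrable ψ volume p q) :
    Continuous (yamadaWatanabe ψ) :=
  (intervalIntegral.continuous_primitive
    (intervalIntegral.continuous_primitive hψ 0).intervalIntegrable 0).comp continuous_abs

lemma hasDerivAt_yamadaWatanabe (hψ : ∀ p q, IntervalIntegrable ψ volume p q) {x : ℝ}
    (hx : 0 < x) : HasDerivAt (yamadaWatanabe ψ) (∫ z in (0 : ℝ)..x, ψ z) x := by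
  have hprim : HasDerivAt (fun x => ∫ y in (0 : ℝ)..x, ∫ z in (0 : ℝ)..y, ψ z)
      (∫ z in (0 : ℝ)..x, ψ z) x :=
    ((intervalIntegral.continuous_primitive hψ 0).integral_hasStrictDerivAt 0 x).hasDerivAt
  refine hprim.congr_of_eventuallyEq ?_
  filter_upwards [lt_mem_nhds hx] with x' hx'
  rw [yamadaWatanabe, abs_of_pos hx']

lemma taylorRemainder_yamadaWatanabe (hψ : ∀ p q, IntervalIntegrable ψ volume p q) (hw : 0 < w)
    (hh : 0 ≤ h) :
    taylorRemainder (yamadaWatanabe ψ) w h = ∫ y in w..(w + h), ∫ z in w..y, ψ z := by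
  rw [taylorRemainder_eq_integral hh
    (fun y hy => hasDerivAt_yamadaWatanabe hψ (hw.trans_le hy.1))
    (intervalIntegral.continuous_primitive hψ 0).continuousOn]
  exact intervalIntegral.integral_congr fun y _ =>
    intervalIntegral.integral_interval_sub_left (hψ 0 y) (hψ 0 w)

lemma taylorRemainder_yamadaWatanabe_nonneg (hψ : ∀ p q, IntervalIntegrable ψ volume p q)
    (hψ_nonneg : ∀ z, w ≤ z → 0 ≤ ψ z) (hw : 0 < w) (hh : 0 ≤ h) :
    0 ≤ taylorRemainder (yamadaWatanabe ψ) w h := by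
  rw [taylorRemainder_yamadaWatanabe hψ hw hh]
  exact intervalIntegral.integral_nonneg (le_add_of_nonneg_right hh) fun y hy =>
    intervalIntegral.integral_nonneg hy.1 fun z hz => hψ_nonneg z hz.1

lemma taylorRemainder_yamadaWatanabe_le_mul (hψ : Integrable ψ) (hψ_nonneg : ∀ z, 0 ≤ ψ z)
    (hw : 0 < w) (hh : 0 ≤ h) :
    taylorRemainder (yamadaWatanabe ψ) w h ≤ (∫ z, ψ z) * h := by
  rw [taylorRemainder_yamadaWatanabe (fun _ _ => hψ.intervalIntegrable) hw hh]
  calc ∫ y in w..(w + h), ∫ z in w..y, ψ z ≤ ∫ _ in w..(w + h), ∫ z, ψ z := by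
        refine intervalIntegral.integral_mono_on (le_add_of_nonneg_right hh)
          ((hψ.continuous_primitive w).intervalIntegrable _ _) intervalIntegrable_const
          fun y hy => ?_
        rw [intervalIntegral.integral_of_le hy.1]
        exact setIntegral_le_integral hψ (ae_of_all _ hψ_nonneg)
    _ = (∫ z, ψ z) * h := by
        rw [intervalIntegral.integral_const, smul_eq_mul, add_sub_cancel_left, mul_comm]

lemma taylorRemainder_yamadaWatanabe_le_mul_sq {c : ℝ}
    (hψ : ∀ p q, IntervalIntegrable ψ volume p q) (hψ_le : ∀ z, w ≤ z → ψ z ≤ c) (hw : 0 < w)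
    (hh : 0 ≤ h) : taylorRemainder (yamadaWatanabe ψ) w h ≤ c * h ^ 2 / 2 := by
  rw [taylorRemainder_yamadaWatanabe hψ hw hh]
  calc ∫ y in w..(w + h), ∫ z in w..y, ψ z ≤ ∫ y in w..(w + h), c * (y - w) := by
        refine intervalIntegral.integral_mono_on (le_add_of_nonneg_right hh)
          ((intervalIntegral.continuous_primitive hψ w).intervalIntegrable _ _)
          (Continuous.intervalIntegrable (by fun_prop) _ _) fun y hy => ?_
        calc ∫ z in w..y, ψ z ≤ ∫ _ in w..y, c :=
              intervalIntegral.integral_mono_on hy.1 (hψ w y) intervalIntegrable_const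
                fun z hz => hψ_le z hz.1
          _ = c * (y - w) := by rw [intervalIntegral.integral_const, smul_eq_mul, mul_comm]
    _ = c * h ^ 2 / 2 := by
        rw [intervalIntegral.integral_const_mul,
          intervalIntegral.integral_comp_sub_right (fun y => y) w, integral_id]
        ring

end YamadaWatanabe

/-- `ψ` is a sub-probability density vanishing on `[r, ∞)` and at most `c / ρ²` on `(0, r)`: what
the Yamada–Watanabe method requires of the second derivative of its approximations, relative to the
modulus of continuity `ρ`. -/
structure IsYamadaWatanabeKernel (ρ : ℝ → ℝ) (c r : ℝ) (ψ : ℝ → ℝ) : Prop where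
  integrable : Integrable ψ
  nonneg : ∀ z, 0 ≤ ψ z
  integral_le_one : ∫ z, ψ z ≤ 1
  eq_zero : ∀ z, r ≤ z → ψ z = 0
  le_mul_inv_sq : ∀ z ∈ Ioo 0 r, ψ z ≤ c * (ρ z ^ 2)⁻¹

namespace IsYamadaWatanabeKernel

variable {ρ ψ : ℝ → ℝ} {c r : ℝ}

lemma of_eq_zero_of_notMem_Ioo {p q : ℝ} (hc : 0 ≤ c) (hqr : q ≤ r)
    (hψ_nonneg : ∀ z, 0 ≤ ψ z) (hψ_int : ∫ z, ψ z = 1) (hψ_supp : ∀ z, z ∉ Ioo p q → ψ z = 0)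
    (hψ_le : ∀ z ∈ Ioo p q, ψ z ≤ c * (ρ z ^ 2)⁻¹) :
    IsYamadaWatanabeKernel ρ c r ψ where
  integrable := integrable_of_integral_eq_one hψ_int
  nonneg := hψ_nonneg
  integral_le_one := hψ_int.le
  eq_zero z hz := hψ_supp z fun hmem => (hqr.trans hz).not_gt hmem.2
  le_mul_inv_sq z _ := by
    by_cases hmem : z ∈ Ioo p q
    · exact hψ_le z hmem
    · rw [hψ_supp z hmem]
      positivity

lemma coeff_nonneg (hψ : IsYamadaWatanabeKernel ρ c r ψ) (hr : 0 < r)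
    (hρ_pos : ∀ z, 0 < z → 0 < ρ z) : 0 ≤ c := by
  have hρ : 0 < (ρ (r / 2) ^ 2)⁻¹ := inv_pos.2 (pow_pos (hρ_pos _ (half_pos hr)) 2)
  exact nonneg_of_mul_nonneg_left
    ((hψ.nonneg _).trans (hψ.le_mul_inv_sq _ ⟨half_pos hr, half_lt_self hr⟩)) hρ

lemma le_mul_inv_sq_of_le (hψ : IsYamadaWatanabeKernel ρ c r ψ) (hr : 0 < r)
    (hρ_mono : MonotoneOn ρ (Ioi 0)) (hρ_pos : ∀ z, 0 < z → 0 < ρ z) {w z : ℝ} (hw : 0 < w)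
    (hwz : w ≤ z) : ψ z ≤ c * (ρ w ^ 2)⁻¹ := by
  have hc : 0 ≤ c := hψ.coeff_nonneg hr hρ_pos
  have hz : 0 < z := hw.trans_le hwz
  rcases lt_or_ge z r with hzr | hrz
  · have hρw : 0 < ρ w := hρ_pos w hw
    have hρwz : ρ w ≤ ρ z := hρ_mono hw hz hwz
    calc ψ z ≤ c * (ρ z ^ 2)⁻¹ := hψ.le_mul_inv_sq z ⟨hz, hzr⟩
      _ ≤ c * (ρ w ^ 2)⁻¹ := by gcongr
  · rw [hψ.eq_zero z hrz]
    positivity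

lemma taylorRemainder_mem_Icc (hψ : IsYamadaWatanabeKernel ρ c r ψ) (hr : 0 < r)
    (hρ_mono : MonotoneOn ρ (Ioi 0)) (hρ_pos : ∀ z, 0 < z → 0 < ρ z) {w h t : ℝ} (hw : 0 < w)
    (hh : 0 ≤ h) (ht : 0 ≤ t) (hht : h ≤ ρ w * t) :
    taylorRemainder (yamadaWatanabe ψ) w h ∈ Icc 0 (min (c / 2 * t ^ 2) (ρ r * t)) := by
  have hc : 0 ≤ c := hψ.coeff_nonneg hr hρ_pos
  have hψ_int : ∀ p q, IntervalIntegrable ψ volume p q := fun _ _ =>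
    hψ.integrable.intervalIntegrable
  have hρw : 0 < ρ w := hρ_pos w hw
  refine ⟨taylorRemainder_yamadaWatanabe_nonneg hψ_int (fun z _ => hψ.nonneg z) hw hh,
    le_min ?_ ?_⟩
  · calc taylorRemainder (yamadaWatanabe ψ) w h ≤ c * (ρ w ^ 2)⁻¹ * h ^ 2 / 2 :=
          taylorRemainder_yamadaWatanabe_le_mul_sq hψ_int
            (fun z => hψ.le_mul_inv_sq_of_le hr hρ_mono hρ_pos hw) hw hh
      _ ≤ c * (ρ w ^ 2)⁻¹ * (ρ w * t) ^ 2 / 2 := by gcongr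
      _ = c / 2 * t ^ 2 := by field_simp
  rcases le_total w r with hwr | hrw
  · calc taylorRemainder (yamadaWatanabe ψ) w h ≤ (∫ z, ψ z) * h :=
          taylorRemainder_yamadaWatanabe_le_mul hψ.integrable hψ.nonneg hw hh
      _ ≤ h := mul_le_of_le_one_left hh hψ.integral_le_one
      _ ≤ ρ w * t := hht
      _ ≤ ρ r * t := mul_le_mul_of_nonneg_right (hρ_mono hw hr hwr) ht
  · calc taylorRemainder (yamadaWatanabe ψ) w h ≤ 0 * h ^ 2 / 2 :=
          taylorRemainder_yamadaWatanabe_le_mul_sq hψ_int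
            (fun z hz => (hψ.eq_zero z (hrw.trans hz)).le) hw hh
      _ = 0 := by rw [zero_mul, zero_div]
      _ ≤ ρ r * t := mul_nonneg (hρ_pos r hr).le ht

lemma taylorRemainder_sub_mem_Icc (hψ : IsYamadaWatanabeKernel ρ c r ψ) (hr : 0 < r)
    (hρ_mono : MonotoneOn ρ (Ioi 0)) (hρ_pos : ∀ z, 0 < z → 0 < ρ z) {S : Set ℝ} {γ : ℝ → ℝ}
    {t x y : ℝ} (hγ : MonotoneOn γ S) (ht : 0 ≤ t) (hx : x ∈ S) (hy : y ∈ S)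
    (hxy : |γ x - γ y| ≤ ρ |x - y| * t) :
    taylorRemainder (yamadaWatanabe ψ) (x - y) (γ x - γ y) ∈
      Icc 0 (min (c / 2 * t ^ 2) (ρ r * t)) := by
  wlog hle : y ≤ x generalizing x y
  · rw [← taylorRemainder_neg_neg (even_yamadaWatanabe ψ), neg_sub, neg_sub]
    exact this hy hx (by rwa [abs_sub_comm, abs_sub_comm y]) (le_of_not_ge hle)
  rcases hle.eq_or_lt with rfl | hlt
  · have hc : 0 ≤ c := hψ.coeff_nonneg hr hρ_pos
    have hρr : 0 < ρ r := hρ_pos r hr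
    rw [sub_self (γ y), taylorRemainder_zero_right]
    exact ⟨le_rfl, le_min (by positivity) (by positivity)⟩
  · rw [abs_of_pos (sub_pos.2 hlt)] at hxy
    exact hψ.taylorRemainder_mem_Icc hr hρ_mono hρ_pos (sub_pos.2 hlt)
      (sub_nonneg.2 (hγ hy hx hle)) ht ((le_abs_self _).trans hxy)

end IsYamadaWatanabeKernel

section Majorant

variable {U : Type*} [MeasurableSpace U] {μ : Measure U} {f : U → ℝ}

lemma norm_min_mul_sq_mul_le {a b t : ℝ} (ha : 0 ≤ a) (hb : 0 ≤ b) (ht : 0 ≤ t) :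
    ‖min (a * t ^ 2) (b * t)‖ ≤ max a b * min t (t ^ 2) := by
  rw [Real.norm_of_nonneg (by positivity), min_comm t, mul_min_of_nonneg _ _ (by positivity)]
  gcongr
  exacts [le_max_left a b, le_max_right a b]

lemma aestronglyMeasurable_min_mul_sq_mul (hf : AEStronglyMeasurable f μ) (a b : ℝ) :
    AEStronglyMeasurable (fun u => min (a * f u ^ 2) (b * f u)) μ :=
  ((hf.pow 2).const_mul a).inf (hf.const_mul b)

lemma integrable_min_mul_sq_mul (hf : AEStronglyMeasurable f μ) (hf_nonneg : ∀ u, 0 ≤ f u)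
    (hf_int : Integrable (fun u => min (f u) (f u ^ 2)) μ) {a b : ℝ} (ha : 0 ≤ a) (hb : 0 ≤ b) :
    Integrable (fun u => min (a * f u ^ 2) (b * f u)) μ :=
  (hf_int.const_mul (max a b)).mono' (aestronglyMeasurable_min_mul_sq_mul hf a b)
    (ae_of_all _ fun u => norm_min_mul_sq_mul_le ha hb (hf_nonneg u))

lemma tendsto_integral_min_mul_sq_mul (hf : AEStronglyMeasurable f μ) (hf_nonneg : ∀ u, 0 ≤ f u)
    (hf_int : Integrable (fun u => min (f u) (f u ^ 2)) μ) {b : ℝ} (hb : 0 ≤ b) :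
    Tendsto (fun a => ∫ u, min (a * f u ^ 2) (b * f u) ∂μ) (nhdsWithin 0 (Ici 0)) (nhds 0) := by
  suffices Tendsto (fun a => ∫ u, min (a * f u ^ 2) (b * f u) ∂μ) (nhdsWithin 0 (Ici 0))
      (nhds (∫ _, (0 : ℝ) ∂μ)) by rwa [integral_zero] at this
  refine tendsto_integral_filter_of_dominated_convergence
    (fun u => max 1 b * min (f u) (f u ^ 2))
    (Eventually.of_forall fun a => aestronglyMeasurable_min_mul_sq_mul hf a b) ?_
    (hf_int.const_mul _) (ae_of_all _ fun u => ?_)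
  · filter_upwards [self_mem_nhdsWithin, nhdsWithin_le_nhds (Iic_mem_nhds one_pos)] with a ha ha1
    refine ae_of_all _ fun u => (norm_min_mul_sq_mul_le ha hb (hf_nonneg u)).trans ?_
    have hfu : 0 ≤ f u := hf_nonneg u
    gcongr
    exact ha1
  · have hcont : Continuous fun a : ℝ => min (a * f u ^ 2) (b * f u) := by fun_prop
    have hzero : min (0 * f u ^ 2) (b * f u) = 0 := by
      rw [zero_mul, min_eq_left (mul_nonneg hb (hf_nonneg u))]
    exact (hcont.tendsto' 0 0 hzero).mono_left nhdsWithin_le_nhds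

end Majorant

lemma exists_forall_le_of_tendstoUniformlyOn_prod {α β : Type*} {F : ℕ → α × β → ℝ} {S : Set α}
    {T : Set β} (hF : TendstoUniformlyOn F 0 atTop (S ×ˢ T)) {ε : ℝ} (hε : 0 < ε) :
    ∃ K : ℕ, 1 ≤ K ∧ ∀ k, K ≤ k → ∀ x ∈ S, ∀ y ∈ T, F k (x, y) ≤ ε := by
  obtain ⟨K, hK⟩ := ((Metric.tendstoUniformlyOn_iff.1 hF ε hε).and
    (eventually_ge_atTop 1)).exists_forall_of_atTop
  refine ⟨K, (hK K le_rfl).2, fun k hk x hx y hy => ?_⟩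
  have hdist := (hK k hk).1 (x, y) ⟨hx, hy⟩
  rw [Pi.zero_apply, dist_zero_left] at hdist
  exact (le_abs_self _).trans hdist.le

theorem stmt10_general {U ι : Type*} [MeasurableSpace U] {μ : Measure U} {l : Filter ι}
    {ψ : ι → ℝ → ℝ} {ρ : ℝ → ℝ} {c : ι → ℝ} {r : ℝ} (hr : 0 < r) (hc : Tendsto c l (nhds 0))
    (hρ_mono : MonotoneOn ρ (Ioi 0)) (hρ_pos : ∀ z, 0 < z → 0 < ρ z)
    (hψ : ∀ᶠ i in l, IsYamadaWatanabeKernel ρ (c i) r (ψ i))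
    {f : U → ℝ} (hf : AEStronglyMeasurable f μ) (hf_nonneg : ∀ u, 0 ≤ f u)
    (hf_int : Integrable (fun u => min (f u) (f u ^ 2)) μ)
    {S : Set ℝ} {g : ℝ → U → ℝ} (hg : ∀ x ∈ S, AEStronglyMeasurable (g x) μ)
    (hg_mono : ∀ u, MonotoneOn (fun x => g x u) S)
    (hg_mod : ∀ x ∈ S, ∀ y ∈ S, ∀ u, |g x u - g y u| ≤ ρ |x - y| * f u) :
    (∀ᶠ i in l, ∀ x ∈ S, ∀ y ∈ S, Integrable
      (fun u => taylorRemainder (yamadaWatanabe (ψ i)) (x - y) (g x u - g y u)) μ) ∧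
    TendstoUniformlyOn (fun i (p : ℝ × ℝ) => ∫ u,
      taylorRemainder (yamadaWatanabe (ψ i)) (p.1 - p.2) (g p.1 u - g p.2 u) ∂μ) 0 l (S ×ˢ S) := by
  have hρr : 0 ≤ ρ r := (hρ_pos r hr).le
  have hc_nonneg : ∀ i, IsYamadaWatanabeKernel ρ (c i) r (ψ i) → 0 ≤ c i / 2 := fun i hi =>
    div_nonneg (hi.coeff_nonneg hr hρ_pos) zero_le_two
  have hbound : ∀ i, IsYamadaWatanabeKernel ρ (c i) r (ψ i) → ∀ x ∈ S, ∀ y ∈ S, ∀ u,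
      taylorRemainder (yamadaWatanabe (ψ i)) (x - y) (g x u - g y u) ∈
        Icc 0 (min (c i / 2 * f u ^ 2) (ρ r * f u)) := fun i hi x hx y hy u =>
    hi.taylorRemainder_sub_mem_Icc (γ := fun x => g x u) hr hρ_mono hρ_pos (hg_mono u)
      (hf_nonneg u) hx hy (hg_mod x hx y hy u)
  have hmajorant : ∀ i, IsYamadaWatanabeKernel ρ (c i) r (ψ i) →
      Integrable (fun u => min (c i / 2 * f u ^ 2) (ρ r * f u)) μ := fun i hi =>
    integrable_min_mul_sq_mul hf hf_nonneg hf_int (hc_nonneg i hi) hρr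
  refine ⟨hψ.mono fun i hi x hx y hy => (hmajorant i hi).mono' ?_ (ae_of_all _ fun u => ?_),
    Metric.tendstoUniformlyOn_iff.2 fun ε hε => ?_⟩
  · have hφ : Continuous (yamadaWatanabe (ψ i)) :=
      continuous_yamadaWatanabe fun _ _ => hi.integrable.intervalIntegrable
    exact (continuous_taylorRemainder hφ (x - y)).comp_aestronglyMeasurable
      ((hg x hx).sub (hg y hy))
  · rw [Real.norm_of_nonneg (hbound i hi x hx y hy u).1]
    exact (hbound i hi x hx y hy u).2
  have hcoeff : Tendsto (fun i => c i / 2) l (nhdsWithin 0 (Ici 0)) :=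
    tendsto_nhdsWithin_iff.2 ⟨by simpa only [zero_div] using hc.div_const 2,
      hψ.mono fun i hi => hc_nonneg i hi⟩
  filter_upwards [hψ, ((tendsto_integral_min_mul_sq_mul hf hf_nonneg hf_int hρr).comp
    hcoeff).eventually_lt_const hε] with i hi hlt
  rintro ⟨x, y⟩ ⟨hx, hy⟩
  rw [Pi.zero_apply, dist_zero_left, Real.norm_of_nonneg
    (integral_nonneg fun u => (hbound i hi x hx y hy u).1)]
  exact (integral_mono_of_nonneg (ae_of_all _ fun u => (hbound i hi x hx y hy u).1)
    (hmajorant i hi) (ae_of_all _ fun u => (hbound i hi x hx y hy u).2)).trans_lt hlt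

/-- Under condition (3.c), `∫_U D_{l(x,y;u)} φ_k(x-y) μ(du) → 0` as `k → ∞`,
uniformly in `x, y ∈ [0,m]`. -/
theorem stmt10 {U : Type*} [MeasurableSpace U] (μ : Measure U)
    (a : ℕ → ℝ) (ψ : ℕ → ℝ → ℝ) (φ : ℕ → ℝ → ℝ)
    (ha_pos : ∀ j, 0 < a j) (ha_anti : StrictAnti a) (ha0 : a 0 = 1)
    (ha_lim : Tendsto a atTop (nhds 0))
    (hψ_cont : ∀ k, 1 ≤ k → Continuous (ψ k))
    (hψ_nonneg : ∀ k, 1 ≤ k → ∀ z, 0 ≤ ψ k z)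
    (hψ_supp : ∀ k, 1 ≤ k → ∀ z, z ∉ Ioo (a k) (a (k - 1)) → ψ k z = 0)
    (hψ_int : ∀ k, 1 ≤ k → (∫ z, ψ k z) = 1)
    (hφ : ∀ k x, φ k x = ∫ y in (0:ℝ)..|x|, ∫ z in (0:ℝ)..y, ψ k z)
    (ρ : ℝ → ℝ) (hρ_nonneg : ∀ z, 0 ≤ z → 0 ≤ ρ z)
    (hρ_mono : MonotoneOn ρ (Ici 0)) (hρ_pos : ∀ z, 0 < z → 0 < ρ z)
    (hψρ : ∀ k, 1 ≤ k → ∀ z ∈ Ioo (a k) (a (k - 1)), ψ k z ≤ (2 / k) * ((ρ z) ^ 2)⁻¹)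
    (m : ℝ) (hm : 1 ≤ m)
    (f : U → ℝ) (hf_meas : Measurable f) (hf_nonneg : ∀ u, 0 ≤ f u)
    (hf_int : Integrable (fun u => min (f u) ((f u) ^ 2)) μ)
    (g : ℝ → U → ℝ)
    (hg_meas : ∀ x ∈ Icc (0:ℝ) m, Measurable (g x))
    (hg_nonneg : ∀ x ∈ Icc (0:ℝ) m, ∀ u, 0 ≤ g x u)
    (hg_mono : ∀ u : U, ∀ x ∈ Icc (0:ℝ) m, ∀ y ∈ Icc (0:ℝ) m, x ≤ y → g x u ≤ g y u)
    (hg_lip : ∀ x ∈ Icc (0:ℝ) m, ∀ y ∈ Icc (0:ℝ) m, ∀ u : U,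
      |g x u - g y u| ≤ ρ |x - y| * f u) :
    ∀ ε : ℝ, 0 < ε → ∃ K : ℕ, 1 ≤ K ∧ ∀ k : ℕ, K ≤ k →
      ∀ x ∈ Icc (0:ℝ) m, ∀ y ∈ Icc (0:ℝ) m,
        (∫ u, (φ k (x - y + (g x u - g y u)) - φ k (x - y)
            - deriv (φ k) (x - y) * (g x u - g y u)) ∂μ) ≤ ε := by
  obtain rfl : φ = fun k => yamadaWatanabe (ψ k) := funext₂ hφ
  have hkernel : ∀ k : ℕ, 1 ≤ k → IsYamadaWatanabeKernel ρ (2 / k) 1 (ψ k) := fun k hk =>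
    .of_eq_zero_of_notMem_Ioo (by positivity) (ha0 ▸ ha_anti.antitone (Nat.zero_le _))
      (hψ_nonneg k hk) (hψ_int k hk) (hψ_supp k hk) (hψρ k hk)
  exact fun ε => exists_forall_le_of_tendstoUniformlyOn_prod
    (stmt10_general one_pos (tendsto_const_div_atTop_nhds_zero_nat 2)
      (hρ_mono.mono Ioi_subset_Ici_self) hρ_pos ((eventually_ge_atTop 1).mono hkernel)
      hf_meas.aestronglyMeasurable hf_nonneg hf_int
      (fun x hx => (hg_meas x hx).aestronglyMeasurable) hg_mono hg_lip).2
end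

section
/- For all ζ > 0 and h ≥ 0, one has 0 ≤ φ̃_k(ζ + h) − φ̃_k(ζ) − φ̃_k′(ζ) h ≤ min( k^{−1} h² ρ(ζ)^{−2}, h ). -/
/-!
Let `φ` be a second primitive of `ψ`. The remainder of `φ` after its tangent line at `ζ` is the
second primitive of `ψ` based at `ζ`, that is, `∫ y in ζ..ζ + h, ∫ z in ζ..y, ψ z`. It is monotone
in `ψ`: on `[ζ, ∞)` monotonicity of `ρ` gives `0 ≤ ψ ≤ (2 / k) ρ(ζ)⁻²`, and comparing with the
constants yields the lower bound `0` and the quadratic upper bound. The linear bound holds because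
each inner integral is at most the total mass of `ψ`.
-/

open MeasureTheory Set Filter

section SecondPrimitive

variable {E : Type*} [NormedAddCommGroup E] [NormedSpace ℝ E]

/-- The iterated integral `x ↦ ∫ y in a..x, ∫ z in a..y, f z`: the second primitive of `f` that
vanishes to first order at the base point `a`. -/
noncomputable def secondPrimitive (f : ℝ → E) (a x : ℝ) : E :=
  ∫ y in a..x, ∫ z in a..y, f z

theorem hasDerivAt_secondPrimitive [CompleteSpace E] {f : ℝ → E}
    (hf : ∀ a b, IntervalIntegrable f volume a b) (a x : ℝ) :
    HasDerivAt (secondPrimitive f a) (∫ z in a..x, f z) x :=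
  (intervalIntegral.continuous_primitive hf a).integral_hasStrictDerivAt a x |>.hasDerivAt

theorem secondPrimitive_sub_sub_smul_deriv [CompleteSpace E] {f : ℝ → E}
    (hf : ∀ a b, IntervalIntegrable f volume a b) (a x y : ℝ) :
    secondPrimitive f a y - secondPrimitive f a x - (y - x) • deriv (secondPrimitive f a) x =
      secondPrimitive f x y := by
  have hprim : ∀ b c, IntervalIntegrable (fun t => ∫ z in a..t, f z) volume b c :=
    fun b c => (intervalIntegral.continuous_primitive hf a).intervalIntegrable b c
  calc secondPrimitive f a y - secondPrimitive f a x - (y - x) • deriv (secondPrimitive f a) x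
      = (∫ t in x..y, ∫ z in a..t, f z) - ∫ _ in x..y, ∫ z in a..x, f z := by
        rw [(hasDerivAt_secondPrimitive hf a x).deriv, intervalIntegral.integral_const,
          secondPrimitive, secondPrimitive,
          intervalIntegral.integral_interval_sub_left (hprim _ _) (hprim _ _)]
    _ = ∫ t in x..y, ((∫ z in a..t, f z) - ∫ z in a..x, f z) :=
        (intervalIntegral.integral_sub (hprim _ _) intervalIntegrable_const).symm
    _ = secondPrimitive f x y := by
        simp only [intervalIntegral.integral_interval_sub_left (hf _ _) (hf _ _), secondPrimitive]

theorem intervalIntegrable_primitive {f : ℝ → E} {a b : ℝ} (hf : IntervalIntegrable f volume a b) :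
    IntervalIntegrable (fun y => ∫ z in a..y, f z) volume a b :=
  (intervalIntegral.continuousOn_primitive_interval' hf left_mem_uIcc).intervalIntegrable

theorem secondPrimitive_const [CompleteSpace E] (c : E) (a x : ℝ) :
    secondPrimitive (fun _ => c) a x = ((x - a) ^ 2 / 2) • c := by
  simp only [secondPrimitive, intervalIntegral.integral_const,
    intervalIntegral.integral_smul_const]
  rw [intervalIntegral.integral_comp_sub_right (fun y => y), integral_id]
  simp

end SecondPrimitive

section Bounds

variable {f g : ℝ → ℝ} {a b : ℝ}

theorem secondPrimitive_nonneg (hab : a ≤ b) (hf : ∀ z ∈ Icc a b, 0 ≤ f z) :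
    0 ≤ secondPrimitive f a b :=
  intervalIntegral.integral_nonneg hab fun _ hy =>
    intervalIntegral.integral_nonneg hy.1 fun z hz => hf z ⟨hz.1, hz.2.trans hy.2⟩

theorem secondPrimitive_mono_on (hab : a ≤ b) (hf : IntervalIntegrable f volume a b)
    (hg : IntervalIntegrable g volume a b) (hfg : ∀ z ∈ Icc a b, f z ≤ g z) :
    secondPrimitive f a b ≤ secondPrimitive g a b := by
  refine intervalIntegral.integral_mono_on hab (intervalIntegrable_primitive hf)
    (intervalIntegrable_primitive hg) fun y hy => ?_
  have hsub : uIcc a y ⊆ uIcc a b := uIcc_subset_uIcc_left (Icc_subset_uIcc hy)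
  exact intervalIntegral.integral_mono_on hy.1 (hf.mono_set hsub) (hg.mono_set hsub)
    fun z hz => hfg z ⟨hz.1, hz.2.trans hy.2⟩

theorem secondPrimitive_le_of_le_const {C : ℝ} (hab : a ≤ b) (hf : IntervalIntegrable f volume a b)
    (hfC : ∀ z ∈ Icc a b, f z ≤ C) :
    secondPrimitive f a b ≤ (b - a) ^ 2 / 2 * C :=
  (secondPrimitive_mono_on hab hf intervalIntegrable_const hfC).trans_eq
    (secondPrimitive_const C a b)

theorem secondPrimitive_le_mul_integral (hab : a ≤ b) (hf : Integrable f) (hf_nonneg : 0 ≤ f) :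
    secondPrimitive f a b ≤ (b - a) * ∫ z, f z := by
  have hinner : ∀ y ∈ Icc a b, ∫ z in a..y, f z ≤ ∫ z, f z := fun y hy => by
    rw [intervalIntegral.integral_of_le hy.1]
    exact setIntegral_le_integral hf (Eventually.of_forall hf_nonneg)
  calc secondPrimitive f a b ≤ ∫ _ in a..b, ∫ z, f z :=
        intervalIntegral.integral_mono_on hab (intervalIntegrable_primitive hf.intervalIntegrable)
          intervalIntegrable_const hinner
    _ = (b - a) * ∫ z, f z := intervalIntegral.integral_const _

end Bounds

theorem antitoneOn_inv_sq_of_monotoneOn {α 𝕜 : Type*} [Preorder α] [Field 𝕜] [LinearOrder 𝕜]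
    [IsStrictOrderedRing 𝕜] {ρ : α → 𝕜} {s : Set α} (hρ_mono : MonotoneOn ρ s)
    (hρ_pos : ∀ x ∈ s, 0 < ρ x) : AntitoneOn (fun x => ((ρ x) ^ 2)⁻¹) s := fun x hx _ hy hxy =>
  inv_anti₀ (pow_pos (hρ_pos x hx) 2) (pow_le_pow_left₀ (hρ_pos x hx).le (hρ_mono hx hy hxy) 2)

theorem stmt12_general {k : ℝ} (hk : 0 < k) {ψ : ℝ → ℝ} (hψ_nonneg : ∀ z, 0 ≤ ψ z)
    (hψ_int : (∫ z, ψ z) = 1)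
    {φ : ℝ → ℝ} (hφ : ∀ x, φ x = ∫ y in (0 : ℝ)..x, ∫ z in (0 : ℝ)..y, ψ z)
    {ρ : ℝ → ℝ} (hρ_mono : MonotoneOn ρ (Ioi 0)) (hρ_pos : ∀ z, 0 < z → 0 < ρ z)
    (hψρ : ∀ z, 0 < z → ψ z ≤ (2 / k) * ((ρ z) ^ 2)⁻¹) {ζ h : ℝ} (hζ : 0 < ζ) (hh : 0 ≤ h) :
    0 ≤ φ (ζ + h) - φ ζ - deriv φ ζ * h ∧
      φ (ζ + h) - φ ζ - deriv φ ζ * h ≤ min (k⁻¹ * h ^ 2 * ((ρ ζ) ^ 2)⁻¹) h := by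
  obtain rfl : φ = secondPrimitive ψ 0 := funext hφ
  have hψ : Integrable ψ := .of_integral_ne_zero (hψ_int ▸ one_ne_zero)
  have hψ_le (z : ℝ) (hz : ζ ≤ z) : ψ z ≤ 2 / k * ((ρ ζ) ^ 2)⁻¹ :=
    (hψρ z (hζ.trans_le hz)).trans <| mul_le_mul_of_nonneg_left
      (antitoneOn_inv_sq_of_monotoneOn hρ_mono hρ_pos hζ (hζ.trans_le hz) hz) (by positivity)
  have hle : ζ ≤ ζ + h := le_add_of_nonneg_right hh
  have hrem : secondPrimitive ψ 0 (ζ + h) - secondPrimitive ψ 0 ζ -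
      deriv (secondPrimitive ψ 0) ζ * h = secondPrimitive ψ ζ (ζ + h) := by
    simpa only [add_sub_cancel_left, smul_eq_mul, mul_comm h] using
      secondPrimitive_sub_sub_smul_deriv (fun _ _ => hψ.intervalIntegrable) 0 ζ (ζ + h)
  rw [hrem]
  refine ⟨secondPrimitive_nonneg hle fun z _ => hψ_nonneg z, le_min ?quadratic ?linear⟩
  case quadratic =>
    calc secondPrimitive ψ ζ (ζ + h)
        ≤ (ζ + h - ζ) ^ 2 / 2 * (2 / k * ((ρ ζ) ^ 2)⁻¹) :=
          secondPrimitive_le_of_le_const hle hψ.intervalIntegrable fun z hz => hψ_le z hz.1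
      _ = k⁻¹ * h ^ 2 * ((ρ ζ) ^ 2)⁻¹ := by ring
  case linear =>
    simpa [hψ_int] using secondPrimitive_le_mul_integral hle hψ hψ_nonneg

/-- For `ζ > 0` and `h ≥ 0`: `0 ≤ D_h φ̃_k(ζ) ≤ min(k⁻¹ h² ρ(ζ)⁻², h)`. -/
theorem stmt12 (k : ℕ) (hk : 1 ≤ k) (ak akm1 : ℝ)
    (hak : 0 < ak) (haka : ak < akm1) (hakm1 : akm1 ≤ 1)
    (ψ : ℝ → ℝ) (hψ_cont : Continuous ψ) (hψ_nonneg : ∀ z, 0 ≤ ψ z)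
    (hψ_supp : ∀ z, z ∉ Ioo ak akm1 → ψ z = 0)
    (hψ_int : (∫ z, ψ z) = 1)
    (φ : ℝ → ℝ) (hφ : ∀ x, φ x = ∫ y in (0:ℝ)..x, ∫ z in (0:ℝ)..y, ψ z)
    (ρ : ℝ → ℝ) (hρ_nonneg : ∀ z, 0 ≤ z → 0 ≤ ρ z)
    (hρ_mono : MonotoneOn ρ (Ici 0)) (hρ_pos : ∀ z, 0 < z → 0 < ρ z)
    (hψρ : ∀ z ∈ Ioo ak akm1, ψ z ≤ (2 / k) * ((ρ z) ^ 2)⁻¹) :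
    ∀ ζ h : ℝ, 0 < ζ → 0 ≤ h →
      0 ≤ φ (ζ + h) - φ ζ - deriv φ ζ * h ∧
      φ (ζ + h) - φ ζ - deriv φ ζ * h
        ≤ min ((k : ℝ)⁻¹ * h ^ 2 * ((ρ ζ) ^ 2)⁻¹) h := by
  have hψρ_all (z : ℝ) : ψ z ≤ 2 / k * ((ρ z) ^ 2)⁻¹ :=
    if hz : z ∈ Ioo ak akm1 then hψρ z hz else (hψ_supp z hz).trans_le (by positivity)
  exact fun ζ h => stmt12_general (Nat.cast_pos.2 hk) hψ_nonneg hψ_int hφ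
    (hρ_mono.mono Ioi_subset_Ici_self) hρ_pos fun z _ => hψρ_all z
end
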